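/- Let k ≥ 2 and 0 ≤ ℓ ≤ 2k−2 be integers, let a, b, c ∈ ℤ with a > 0 and d := b²−4ac < 0, and let τ₀ := (−b+i√|d|)/(2a) ∈ ℍ be the associated CM point of discriminant d. Then |d|^{(k−1)/2} · (R_{2−2k}^{k−1}(τ^ℓ))(τ₀) is a rational number, where the iterated raising operator is applied to the function τ ↦ τ^ℓ and then evaluated at τ₀. -/

import Mathlib

open Complex MeasureTheory
open scoped Real

noncomputable section

namespace LHMF

abbrev SL2Z := Matrix.SpecialLinearGroup (Fin 2) ℤ

/-- Möbius action of `SL₂(ℤ)` on `ℂ`. -/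
def moeb (M : SL2Z) (τ : ℂ) : ℂ :=
  ((M.1 0 0 : ℂ) * τ + (M.1 0 1 : ℂ)) / ((M.1 1 0 : ℂ) * τ + (M.1 1 1 : ℂ))

/-- Automorphy factor `j(M,τ) = cτ + d`. -/
def jfac (M : SL2Z) (τ : ℂ) : ℂ := (M.1 1 0 : ℂ) * τ + (M.1 1 1 : ℂ)

/-- `E₁`: union of all `SL₂(ℤ)`-translates of the positive imaginary axis. -/
def E1 : Set ℂ := ⋃ M : SL2Z, (fun y : ℝ => moeb M ((y : ℂ) * Complex.I)) '' Set.Ioi 0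

/-- Wirtinger derivative `∂f/∂τ`. -/
def dtau (f : ℂ → ℂ) (τ : ℂ) : ℂ :=
  (fderiv ℝ f τ 1 - Complex.I * fderiv ℝ f τ Complex.I) / 2

/-- Wirtinger derivative `∂f/∂τ̄`. -/
def dtaubar (f : ℂ → ℂ) (τ : ℂ) : ℂ :=
  (fderiv ℝ f τ 1 + Complex.I * fderiv ℝ f τ Complex.I) / 2

/-- The operator `ξ_κ f = 2i v^κ conj(∂f/∂τ̄)`. -/
def xiOp (κ : ℤ) (f : ℂ → ℂ) (τ : ℂ) : ℂ :=
  2 * Complex.I * ((τ.im : ℂ) ^ κ) * starRingEnd ℂ (dtaubar f τ)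

/-- The operator `𝒟 = (1/(2πi)) ∂/∂τ`. -/
def Dop (f : ℂ → ℂ) : ℂ → ℂ := fun τ => (2 * (π : ℂ) * Complex.I)⁻¹ * dtau f τ

/-- Maass raising operator of weight `κ`. -/
def raiseOp (κ : ℤ) (f : ℂ → ℂ) (τ : ℂ) : ℂ :=
  2 * Complex.I * dtau f τ + (κ : ℂ) * (τ.im : ℂ)⁻¹ * f τ

/-- Iterated raising operator `R_κ^m = R_{κ+2m-2} ∘ ⋯ ∘ R_{κ+2} ∘ R_κ`. -/
def raiseIter (κ : ℤ) : ℕ → (ℂ → ℂ) → (ℂ → ℂ)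
  | 0 => fun f => f
  | m + 1 => fun f => raiseOp (κ + 2 * m) (raiseIter κ m f)

/-- Petersson's Poincaré series `H_{k,k-1}(z,τ)`. -/
def Hpet (k : ℕ) (z τ : ℂ) : ℂ :=
  ∑' M : SL2Z, jfac M τ ^ (2 * k - 2) * ((moeb M τ).im : ℂ) ^ (2 * k - 1) *
    (z - moeb M τ)⁻¹ * (z - starRingEnd ℂ (moeb M τ)) ^ (1 - 2 * (k : ℤ))

/-- The locally harmonic Maass form `H_{1-k,n}`. -/
def Hlhmf (k n : ℕ) (τ : ℂ) : ℂ :=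
  (2 * Complex.I) ^ (2 * k - 2) / (2 * (π : ℂ)) *
    ∫ y in Set.Ioi (0 : ℝ), Hpet k ((y : ℂ) * Complex.I) τ * (y : ℂ) ^ n

/-- The cusp form `R_n` of weight `2k`. -/
def Rnform (k n : ℕ) (τ : ℂ) : ℂ :=
  (2 : ℂ) ^ (2 * k - 3) / (Complex.I ^ (2 * k - 1 - n) * (Nat.choose (2 * k - 2) n : ℂ) * (π : ℂ)) *
    ∑' M : SL2Z, jfac M τ ^ (-2 * (k : ℤ)) * moeb M τ ^ (-(n : ℤ) - 1)

/-- Holomorphic Eichler integral of `f` (weight `2k`), along a vertical path. -/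
def eichlerHol (k : ℕ) (f : ℂ → ℂ) (τ : ℂ) : ℂ :=
  (-2 * (π : ℂ) * Complex.I) ^ (2 * k - 1) / (Nat.factorial (2 * k - 2) : ℂ) *
    ∫ t in Set.Ioi (0 : ℝ), f (τ + (t : ℂ) * Complex.I) * ((t : ℂ) * Complex.I) ^ (2 * k - 2) *
      Complex.I

/-- Non-holomorphic Eichler integral `f^*` of `f` (weight `2k`), along a vertical path. -/
def eichlerStar (k : ℕ) (f : ℂ → ℂ) (τ : ℂ) : ℂ :=
  (-2 * Complex.I) ^ (1 - 2 * (k : ℤ)) *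
    ∫ t in Set.Ioi (0 : ℝ),
      starRingEnd ℂ (f (-(starRingEnd ℂ (-(starRingEnd ℂ τ) + (t : ℂ) * Complex.I)))) *
        (-(starRingEnd ℂ τ) + (t : ℂ) * Complex.I + τ) ^ (2 * k - 2) * Complex.I

/-- Bernoulli polynomial evaluated at a complex number. -/
def bernC (m : ℕ) (τ : ℂ) : ℂ := Polynomial.aeval τ (Polynomial.bernoulli m)

/-- Periodized Bernoulli polynomial `𝔹_m(τ) = B_m(τ - ⌊Re τ⌋)`. -/
def bernPer (m : ℕ) (τ : ℂ) : ℂ := bernC m (τ - (⌊τ.re⌋ : ℂ))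

/-- The period `r_n(E_{2k})` of the Eisenstein series, for `0 < n < 2k-2`. -/
def rnE (k n : ℕ) : ℚ :=
  if n % 2 = 0 then 0
  else (-1) ^ ((n - 1) / 2) * (2 * (k : ℚ)) * bernoulli (n + 1) * bernoulli (2 * k - 1 - n) /
    (bernoulli (2 * k) * ((n : ℚ) + 1) * ((2 * k - 1 - n : ℕ) : ℚ))

/-- The local polynomial `P_{1-k,n}`. -/
def Ppoly (k n : ℕ) (τ : ℂ) : ℂ :=
  (rnE k n : ℂ)
  + (-Complex.I) ^ (n + 1) / ((n : ℂ) + 1) * bernPer (n + 1) τ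
  + Complex.I ^ (n + 1) / ((2 * k - 1 - n : ℕ) : ℂ) * bernPer (2 * k - 1 - n) τ
  + Complex.I ^ (1 - (n : ℤ)) / 2 *
      ∑' M : {M : SL2Z // 0 < M.1 0 0 * M.1 1 0 ∧ (moeb M τ).re < 0},
        jfac M.1 τ ^ (2 * k - 2) *
          (moeb M.1 τ ^ n - (-1 : ℂ) ^ n * moeb M.1 τ ^ (2 * k - 2 - n))

/-- The binary quadratic form `[a,b,c]` evaluated at complex arguments. -/
def qfC (a b c : ℤ) (x y : ℂ) : ℂ := (a : ℂ) * x ^ 2 + (b : ℂ) * x * y + (c : ℂ) * y ^ 2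

/-- CM point of the positive definite form `[a,b,c]`. -/
def cmPoint (a b c : ℤ) : ℂ :=
  (-(b : ℂ) + Complex.I * ((Real.sqrt (((b ^ 2 - 4 * a * c).natAbs : ℝ))) : ℂ)) / (2 * (a : ℂ))

/-- The form `[a,b,c] ∘ M`. -/
def qfComp (a b c : ℤ) (M : SL2Z) : ℤ × ℤ × ℤ :=
  (a * (M.1 0 0) ^ 2 + b * (M.1 0 0) * (M.1 1 0) + c * (M.1 1 0) ^ 2,
   2 * a * (M.1 0 0) * (M.1 0 1) + b * ((M.1 0 0) * (M.1 1 1) + (M.1 0 1) * (M.1 1 0)) +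
     2 * c * (M.1 1 0) * (M.1 1 1),
   a * (M.1 0 1) ^ 2 + b * (M.1 0 1) * (M.1 1 1) + c * (M.1 1 1) ^ 2)

/-- `w_P`: order of the stabilizer of `P = [a,b,c]` in `PSL₂(ℤ)` (half the order of the
stabilizer in `SL₂(ℤ)`, which contains `±1`). -/
def wP (a b c : ℤ) : ℕ := Nat.card {M : SL2Z // qfComp a b c M = (a, b, c)} / 2

/-- The meromorphic modular form `f_{k,P}` for `P = [a,b,c]`. -/
def fkP (k : ℕ) (a b c : ℤ) (z : ℂ) : ℂ :=
  (((((b ^ 2 - 4 * a * c).natAbs : ℝ)) ^ ((k : ℝ) - 1 / 2) : ℝ) : ℂ) /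
      (2 * (π : ℂ) * (wP a b c : ℂ)) *
    ∑' M : SL2Z, (qfC a b c ((M.1 0 0 : ℂ) * z + (M.1 0 1 : ℂ))
      ((M.1 1 0 : ℂ) * z + (M.1 1 1 : ℂ))) ^ (-(k : ℤ))

/-- The `n`-th period `r_n(f) = ∫₀^∞ f(iy) y^n dy`. -/
def periodN (n : ℕ) (f : ℂ → ℂ) : ℂ :=
  ∫ y in Set.Ioi (0 : ℝ), f ((y : ℂ) * Complex.I) * (y : ℂ) ^ n

/-- Epstein zeta function of `[a,b,c]` at an integer `k`. -/
def epstein (a b c : ℤ) (k : ℕ) : ℝ :=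
  ∑' p : {p : ℤ × ℤ // p ≠ (0, 0)},
    ((a * p.1.1 ^ 2 + b * p.1.1 * p.1.2 + c * p.1.2 ^ 2 : ℤ) : ℝ) ^ (-(k : ℤ))

/-- `sgn(M)` for `M = (a,b;c,d)`: `sgn(ac)` if `ac ≠ 0`, else `sgn(bd)`. -/
def sgnM (M : SL2Z) : ℤ :=
  if M.1 0 0 * M.1 1 0 ≠ 0 then Int.sign (M.1 0 0 * M.1 1 0) else Int.sign (M.1 0 1 * M.1 1 1)

/-- Upper incomplete Gamma function `Γ(s,x)` for a natural number `s`. -/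
def GammaUpper (s : ℕ) (x : ℝ) : ℝ := ∫ t in Set.Ioi x, Real.exp (-t) * t ^ (s - 1)

/-- A cusp form of weight `2k` for `SL₂(ℤ)`, as a function on `ℂ` (holomorphic on `ℍ`,
modular of weight `2k`, vanishing at the cusp `i∞`). -/
def IsCuspForm2k (k : ℕ) (f : ℂ → ℂ) : Prop :=
  (∀ τ : ℂ, 0 < τ.im → DifferentiableAt ℂ f τ) ∧
  (∀ (M : SL2Z) (τ : ℂ), 0 < τ.im → f (moeb M τ) = jfac M τ ^ (2 * k) * f τ) ∧
  Filter.Tendsto f (Filter.comap Complex.im Filter.atTop) (nhds 0)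

/-- `f` is real differentiable at `τ` with Wirtinger derivative `f'`. -/
def HasDt (f : ℂ → ℂ) (f' τ : ℂ) : Prop := DifferentiableAt ℝ f τ ∧ dtau f τ = f'

theorem HasDt.mul {f g : ℂ → ℂ} {f' g' τ : ℂ} (hf : HasDt f f' τ) (hg : HasDt g g' τ) :
    HasDt (fun z => f z * g z) (f' * g τ + f τ * g') τ := by
  refine ⟨hf.1.mul hg.1, ?_⟩
  rw [← hf.2, ← hg.2]
  unfold dtau
  rw [show (fun z => f z * g z) = f * g from rfl, fderiv_mul hf.1 hg.1]
  simp
  ring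

theorem HasDt.add {f g : ℂ → ℂ} {f' g' τ : ℂ} (hf : HasDt f f' τ) (hg : HasDt g g' τ) :
    HasDt (fun z => f z + g z) (f' + g') τ := by
  refine ⟨hf.1.add hg.1, ?_⟩
  rw [← hf.2, ← hg.2]
  unfold dtau
  rw [show (fun z => f z + g z) = f + g from rfl, fderiv_add hf.1 hg.1]
  simp
  ring

theorem hasDt_const (a τ : ℂ) : HasDt (fun _ => a) 0 τ := by
  refine ⟨differentiableAt_const _, ?_⟩
  simp [dtau]

theorem hasDt_id (τ : ℂ) : HasDt (fun z => z) 1 τ := by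
  refine ⟨differentiableAt_id, ?_⟩
  simp [dtau]

theorem hasDt_conj (τ : ℂ) : HasDt (fun z => starRingEnd ℂ z) 0 τ := by
  have h : HasFDerivAt (fun z => starRingEnd ℂ z) (Complex.conjCLE : ℂ →L[ℝ] ℂ) τ :=
    (Complex.conjCLE : ℂ →L[ℝ] ℂ).hasFDerivAt
  refine ⟨h.differentiableAt, ?_⟩
  simp [dtau, h.fderiv]

theorem hasDt_im (τ : ℂ) : HasDt (fun z => (z.im : ℂ)) (-Complex.I / 2) τ := by
  have h : HasFDerivAt (fun z : ℂ => (z.im : ℂ)) (Complex.ofRealCLM.comp Complex.imCLM) τ :=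
    (Complex.ofRealCLM.comp Complex.imCLM).hasFDerivAt
  refine ⟨h.differentiableAt, ?_⟩
  simp [dtau, h.fderiv]

theorem HasDt.congr {f g : ℂ → ℂ} {f' τ : ℂ} (hf : HasDt f f' τ) (h : g =ᶠ[nhds τ] f) :
    HasDt g f' τ := by
  refine ⟨hf.1.congr_of_eventuallyEq h, ?_⟩
  rw [← hf.2]
  unfold dtau
  rw [h.fderiv_eq]

theorem HasDt.sum {ι : Type*} (s : Finset ι) {f : ι → ℂ → ℂ} {f' : ι → ℂ} {τ : ℂ}
    (hf : ∀ i ∈ s, HasDt (f i) (f' i) τ) :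
    HasDt (fun z => ∑ i ∈ s, f i z) (∑ i ∈ s, f' i) τ := by
  classical
  induction s using Finset.induction_on with
  | empty => simpa using hasDt_const 0 τ
  | insert a s ha ih =>
    simp only [Finset.sum_insert ha]
    exact (hf a (by simp)).add (ih fun i hi => hf i (by simp [hi]))

theorem hasDt_inv_im (τ : ℂ) (hτ : 0 < τ.im) :
    HasDt (fun z => (z.im : ℂ)⁻¹) (Complex.I / 2 * (τ.im : ℂ)⁻¹ ^ 2) τ := by
  have hne : (τ.im : ℂ) ≠ 0 := by exact_mod_cast hτ.ne'
  have hd : DifferentiableAt ℝ (fun z : ℂ => (z.im : ℂ)⁻¹) τ := (hasDt_im τ).1.inv hne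
  refine ⟨hd, ?_⟩
  have h1 : HasDt (fun z : ℂ => (z.im : ℂ)⁻¹) (dtau (fun z : ℂ => (z.im : ℂ)⁻¹) τ) τ := ⟨hd, rfl⟩
  have h2 := h1.mul (hasDt_im τ)
  have hev : ∀ᶠ z : ℂ in nhds τ, 0 < z.im :=
    (isOpen_lt continuous_const Complex.continuous_im).mem_nhds hτ
  have h3 : HasDt (fun z : ℂ => (z.im : ℂ)⁻¹ * (z.im : ℂ)) 0 τ := by
    refine (hasDt_const 1 τ).congr ?_
    filter_upwards [hev] with z hz
    exact inv_mul_cancel₀ (by exact_mod_cast hz.ne')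
  have h4 := h2.2.symm.trans h3.2
  field_simp at h4 ⊢
  linear_combination h4

theorem HasDt.pow {f : ℂ → ℂ} {f' τ : ℂ} (hf : HasDt f f' τ) (m : ℕ) :
    HasDt (fun z => f z ^ (m + 1)) ((m + 1) * f τ ^ m * f') τ := by
  induction m with
  | zero => simpa using hf
  | succ m ih =>
    have := ih.mul hf
    simp only [← pow_succ] at this
    convert this using 1
    push_cast
    ring

open Polynomial in
/-- coefficientwise Wirtinger derivative of a polynomial-valued function -/
def HasDP (F : ℂ → ℂ[X]) (F' : ℂ[X]) (τ : ℂ) : Prop :=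
  ∀ l, HasDt (fun z => (F z).coeff l) (F'.coeff l) τ

open Polynomial in
theorem HasDP.mul {F G : ℂ → ℂ[X]} {F' G' : ℂ[X]} {τ : ℂ} (hF : HasDP F F' τ)
    (hG : HasDP G G' τ) : HasDP (fun z => F z * G z) (F' * G τ + F τ * G') τ := by
  intro l
  simp only [Polynomial.coeff_mul, Polynomial.coeff_add, ← Finset.sum_add_distrib]
  exact HasDt.sum _ fun i _ => (hF _).mul (hG _)

open Polynomial in
theorem HasDP.pow {F : ℂ → ℂ[X]} {F' : ℂ[X]} {τ : ℂ} (hF : HasDP F F' τ) (m : ℕ) :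
    HasDP (fun z => F z ^ (m + 1)) (((m : ℂ[X]) + 1) * F τ ^ m * F') τ := by
  induction m with
  | zero => simpa using hF
  | succ m ih =>
    have := ih.mul hF
    simp only [← pow_succ] at this
    convert this using 1
    push_cast
    ring

open Polynomial in
theorem HasDP.pow_zero' {F : ℂ → ℂ[X]} {τ : ℂ} (hF : HasDP F 0 τ) (m : ℕ) :
    HasDP (fun z => F z ^ m) 0 τ := by
  cases m with
  | zero => intro l; simpa using hasDt_const _ τ
  | succ m => simpa using hF.pow m

open Polynomial in
theorem hasDP_lin {f : ℂ → ℂ} {f' τ : ℂ} (hf : HasDt f f' τ) :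
    HasDP (fun z => 1 + C (f z) * X) (C f' * X) τ := by
  intro l
  simp only [coeff_add, coeff_C_mul]
  simpa using (hasDt_const ((1 : ℂ[X]).coeff l) τ).add (hf.mul (hasDt_const ((X : ℂ[X]).coeff l) τ))

open Polynomial in
/-- `(1+τX)^p (1+τ̄X)^q` -/
def PP (p q : ℕ) (z : ℂ) : ℂ[X] := (1 + C z * X) ^ p * (1 + C (starRingEnd ℂ z) * X) ^ q

open Polynomial in
theorem hasDP_PP (p q : ℕ) (τ : ℂ) :
    HasDP (PP (p + 1) q) (C ((p : ℂ) + 1) * X * PP p q τ) τ := by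
  have h := ((hasDP_lin (hasDt_id τ)).pow p).mul (HasDP.pow_zero' (by simpa using hasDP_lin (hasDt_conj τ)) q)
  refine Eq.subst (motive := fun P => HasDP (PP (p + 1) q) P τ) ?_ h
  simp only [PP, map_add, map_one, map_natCast]
  ring

open Polynomial in
theorem PP_rel (p q : ℕ) (τ : ℂ) :
    C (2 * Complex.I * τ.im) * X * PP p q τ = PP (p + 1) q τ - PP p (q + 1) τ := by
  have h : (2 * Complex.I * τ.im : ℂ) = τ - starRingEnd ℂ τ := by
    rw [Complex.sub_conj]; push_cast; ring
  rw [h]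
  simp only [PP, map_sub]
  ring

theorem raiseIter_formula (n l : ℕ) (hl : l ≤ n) (m : ℕ) : ∀ p : ℕ, p + m = n →
    ∃ q : ℚ, ∀ τ : ℂ, 0 < τ.im → raiseIter (-(n : ℤ)) m (fun w => w ^ l) τ =
      q * ((τ.im : ℂ)⁻¹ ^ m * (PP p m τ).coeff l) := by
  induction m with
  | zero =>
    intro p hp
    have hpn : p = n := by simpa using hp
    subst hpn
    refine ⟨((p.choose l : ℕ) : ℚ)⁻¹, fun τ _ => ?_⟩
    have hc : ((p.choose l : ℕ) : ℂ) ≠ 0 := by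
      exact_mod_cast (Nat.choose_pos hl).ne'
    have : (PP p 0 τ).coeff l = p.choose l * τ ^ l := by
      have h : PP p 0 τ = ((1 + Polynomial.X) ^ p : Polynomial ℂ).comp
          (Polynomial.C τ * Polynomial.X) := by
        simp [PP]
      rw [h, Polynomial.comp_C_mul_X_coeff, Polynomial.coeff_one_add_X_pow]
    rw [this]
    simp only [raiseIter]
    push_cast
    field_simp
  | succ m ih =>
    intro p hp
    obtain ⟨q, hq⟩ := ih (p + 1) (by omega)
    refine ⟨-(p + 1) * q, fun τ hτ => ?_⟩
    have hne : (τ.im : ℂ) ≠ 0 := by exact_mod_cast hτ.ne'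
    have hev : ∀ᶠ z : ℂ in nhds τ, 0 < z.im :=
      (isOpen_lt continuous_const Complex.continuous_im).mem_nhds hτ
    have hpw : HasDt (fun z : ℂ => (z.im : ℂ)⁻¹ ^ m)
        (m * (τ.im : ℂ)⁻¹ ^ (m + 1) * (Complex.I / 2)) τ := by
      cases m with
      | zero => simpa using hasDt_const 1 τ
      | succ m =>
        convert (hasDt_inv_im τ hτ).pow m using 1
        push_cast
        ring
    have h1 := (hasDt_const (q : ℂ) τ).mul (hpw.mul (hasDP_PP p m τ l))
    have h2 := h1.congr (g := raiseIter (-(n : ℤ)) m (fun w => w ^ l))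
      (by filter_upwards [hev] with z hz using hq z hz)
    have hrel := congrArg (fun P => Polynomial.coeff P l) (PP_rel p m τ)
    simp only [Polynomial.coeff_sub, mul_assoc, Polynomial.coeff_C_mul] at hrel
    simp only [raiseIter, raiseOp]
    rw [h2.2, hq τ hτ]
    simp only [mul_assoc, Polynomial.coeff_C_mul]
    have e : (PP p (m + 1) τ).coeff l = (PP (p + 1) m τ).coeff l -
      2 * (Complex.I * (τ.im * (Polynomial.X * PP p m τ).coeff l)) := by
      rw [hrel]; ring
    rw [e]
    have hn : (n : ℂ) = p + m + 1 := by rw [← hp]; push_cast; ring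
    push_cast
    rw [hn]
    generalize (Polynomial.X * PP p m τ).coeff l = x
    generalize (PP (p + 1) m τ).coeff l = y
    have hI := Complex.I_sq
    have hv := mul_inv_cancel₀ hne
    linear_combination (-2 * Complex.I * q * (p + 1) * x * (τ.im : ℂ)⁻¹ ^ m) * hv +
      (q * m * (τ.im : ℂ)⁻¹ ^ (m + 1) * y) * hI

/-- rationality of `|d|^{(k-1)/2} (R_{2-2k}^{k-1} τ^ℓ)(τ₀)` at CM points. -/
theorem raised_tau_pow_rational_at_CM (k ℓ : ℕ) (hk : 2 ≤ k) (hℓ : ℓ ≤ 2 * k - 2)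
    (a b c : ℤ) (ha : 0 < a) (hd : b ^ 2 - 4 * a * c < 0) :
    ∃ q : ℚ,
      (((((b ^ 2 - 4 * a * c).natAbs : ℝ)) ^ (((k : ℝ) - 1) / 2) : ℝ) : ℂ) *
        raiseIter (2 - 2 * k) (k - 1) (fun w => w ^ ℓ) (cmPoint a b c) = (q : ℂ) := by
  obtain ⟨m, rfl⟩ : ∃ m, k = m + 1 := ⟨k - 1, by omega⟩
  obtain ⟨q, hq⟩ := raiseIter_formula (2 * m) ℓ (by omega) m m (by omega)
  have hk1 : (2 - 2 * ((m + 1 : ℕ) : ℤ)) = -((2 * m : ℕ) : ℤ) := by push_cast; ring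
  rw [hk1, Nat.add_sub_cancel]
  obtain ⟨D, hD⟩ : ∃ D : ℝ, D = (((b ^ 2 - 4 * a * c).natAbs : ℕ) : ℝ) := ⟨_, rfl⟩
  have hD' : D = 4 * a * c - b ^ 2 := by
    have h : (((b ^ 2 - 4 * a * c).natAbs : ℕ) : ℤ) = 4 * a * c - b ^ 2 := by omega
    rw [hD, ← Int.cast_natCast, h]
    push_cast
    ring
  have hDpos : 0 < D := by
    rw [hD']
    have : (0 : ℤ) < 4 * a * c - b ^ 2 := by omega
    exact_mod_cast this
  have haR : (0 : ℝ) < a := by exact_mod_cast ha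
  have haC : (a : ℂ) ≠ 0 := by exact_mod_cast ha.ne'
  have hs : 0 < Real.sqrt D := Real.sqrt_pos.2 hDpos
  have hcm : cmPoint a b c =
      ((-(b : ℝ) / (2 * a) : ℝ) : ℂ) + ((Real.sqrt D / (2 * a) : ℝ) : ℂ) * Complex.I := by
    unfold cmPoint
    rw [← hD]
    push_cast
    field_simp
  have him : (cmPoint a b c).im = Real.sqrt D / (2 * a) := by
    rw [hcm, Complex.add_im, Complex.ofReal_im, Complex.im_ofReal_mul]; simp
  have hre : (cmPoint a b c).re = -(b : ℝ) / (2 * a) := by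
    rw [hcm, Complex.add_re, Complex.ofReal_re, Complex.re_ofReal_mul]; simp
  have hpos : 0 < (cmPoint a b c).im := by rw [him]; positivity
  have hsum : cmPoint a b c + starRingEnd ℂ (cmPoint a b c) = ((-b / a : ℚ) : ℂ) := by
    rw [Complex.add_conj, hre]; push_cast; field_simp
  have hprod : cmPoint a b c * starRingEnd ℂ (cmPoint a b c) = ((c / a : ℚ) : ℂ) := by
    rw [Complex.mul_conj, Complex.normSq_apply, hre, him]
    have : -(b : ℝ) / (2 * a) * (-(b : ℝ) / (2 * a)) +
        Real.sqrt D / (2 * a) * (Real.sqrt D / (2 * a)) = c / a := by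
      have h := Real.mul_self_sqrt hDpos.le
      field_simp
      linear_combination h + hD'
    rw [this]; push_cast; rfl
  let P : Polynomial ℚ := (1 + Polynomial.C (-b / a : ℚ) * Polynomial.X +
    Polynomial.C (c / a : ℚ) * Polynomial.X ^ 2) ^ m
  have hP : PP m m (cmPoint a b c) = P.map (algebraMap ℚ ℂ) := by
    simp only [P, PP, Polynomial.map_pow, Polynomial.map_add, Polynomial.map_mul,
      Polynomial.map_one, Polynomial.map_C, Polynomial.map_X, eq_ratCast]
    rw [← hsum, ← hprod, ← mul_pow]
    congr 1
    simp only [map_add, map_mul]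
    ring
  have hpw : D ^ ((((m + 1 : ℕ) : ℝ) - 1) / 2) = Real.sqrt D ^ m := by
    rw [Real.sqrt_eq_rpow, ← Real.rpow_natCast, ← Real.rpow_mul hDpos.le]
    congr 1
    push_cast
    ring
  refine ⟨q * (2 * a) ^ m * P.coeff ℓ, ?_⟩
  rw [hq _ hpos, hP, Polynomial.coeff_map, ← hD, hpw, him]
  have hsC : ((Real.sqrt D : ℝ) : ℂ) ≠ 0 := by exact_mod_cast hs.ne'
  simp only [eq_ratCast]
  push_cast
  rw [inv_div, div_pow]
  field_simp

end LHMF
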